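/- Assume at least one label equals +1, at least one label equals −1, and the data are linearly separable. For each τ > 0 let (β̂(τ), β̂₀(τ)) be the unique maximizer of M_τ(β,β₀) := min_{1≤i≤n} ỹ_i(⟨x_i,β⟩+β₀) over {β : ‖β‖₂ ≤ 1} × ℝ, and let κ̂(τ) be the optimal value. Then for every τ > 0: β̂(τ) = β̂(1), β̂₀(τ) = β̂₀(1) + ((τ−1)/(τ+1))·κ̂(1), and κ̂(τ) = (2/(τ+1))·κ̂(1). -/

import Mathlib

open scoped RealInnerProductSpace

/-- Relation between the margin-rebalanced SVM solution at
parameter `τ` and the solution at `τ = 1`. -/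
theorem stmt_1
    (n d : ℕ) (hn : 1 ≤ n) (hd : 1 ≤ d)
    (x : Fin n → EuclideanSpace ℝ (Fin d))
    (y : Fin n → ℝ) (hy : ∀ i, y i = 1 ∨ y i = -1)
    (hplus : ∃ i, y i = 1) (hminus : ∃ i, y i = -1)
    (hsep : ∃ (β : EuclideanSpace ℝ (Fin d)) (β₀ : ℝ),
      ∀ i, 0 < y i * (⟪x i, β⟫ + β₀))
    (ytil : ℝ → Fin n → ℝ)
    (hytil1 : ∀ τ i, y i = 1 → ytil τ i = 1 / τ)
    (hytil2 : ∀ τ i, y i = -1 → ytil τ i = -1)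
    (M : ℝ → EuclideanSpace ℝ (Fin d) → ℝ → ℝ)
    (hM : ∀ τ β β₀, M τ β β₀ =
      (Finset.univ : Finset (Fin n)).inf' ⟨hplus.choose, Finset.mem_univ hplus.choose⟩
        fun i => ytil τ i * (⟪x i, β⟫ + β₀))
    (βhat : ℝ → EuclideanSpace ℝ (Fin d)) (βhat₀ : ℝ → ℝ) (κhat : ℝ → ℝ)
    (hnorm : ∀ τ, 0 < τ → ‖βhat τ‖ ≤ 1)
    (hopt : ∀ τ, 0 < τ → ∀ q : EuclideanSpace ℝ (Fin d) × ℝ,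
      ‖q.1‖ ≤ 1 → M τ q.1 q.2 ≤ M τ (βhat τ) (βhat₀ τ))
    (hκ : ∀ τ, 0 < τ → κhat τ = M τ (βhat τ) (βhat₀ τ)) :
    ∀ τ : ℝ, 0 < τ →
      βhat τ = βhat 1 ∧
      βhat₀ τ = βhat₀ 1 + (τ - 1) / (τ + 1) * κhat 1 ∧
      κhat τ = 2 / (τ + 1) * κhat 1 := by
  have hne : (Finset.univ : Finset (Fin n)).Nonempty := ⟨hplus.choose, Finset.mem_univ _⟩
  have hM' : ∀ τ β β₀, M τ β β₀ =
      (Finset.univ : Finset (Fin n)).inf' hne fun i => ytil τ i * (⟪x i, β⟫ + β₀) := hM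
  -- characterization of margins
  have key : ∀ τ, 0 < τ → ∀ β b k, k ≤ M τ β b ↔
      (∀ i, y i = 1 → τ * k ≤ ⟪x i, β⟫ + b) ∧ (∀ i, y i = -1 → k ≤ -(⟪x i, β⟫ + b)) := by
    intro τ hτ β b k
    rw [hM', Finset.le_inf'_iff]
    constructor
    · intro h
      refine ⟨fun i hi => ?_, fun i hi => ?_⟩
      · have := h i (Finset.mem_univ i)
        rw [hytil1 τ i hi, one_div, inv_mul_eq_div, le_div_iff₀ hτ] at this
        linarith
      · have := h i (Finset.mem_univ i)
        rw [hytil2 τ i hi] at this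
        linarith
    · rintro ⟨h1, h2⟩ i -
      rcases hy i with hi | hi
      · rw [hytil1 τ i hi, one_div, inv_mul_eq_div, le_div_iff₀ hτ]
        linarith [h1 i hi]
      · rw [hytil2 τ i hi]
        linarith [h2 i hi]
  have upper : ∀ τ, 0 < τ → ∀ β b k, ‖β‖ ≤ 1 →
      (∀ i, y i = 1 → τ * k ≤ ⟪x i, β⟫ + b) → (∀ i, y i = -1 → k ≤ -(⟪x i, β⟫ + b)) →
      k ≤ κhat τ := by
    intro τ hτ β b k hβ h1 h2
    rw [hκ τ hτ]
    exact ((key τ hτ β b k).2 ⟨h1, h2⟩).trans (hopt τ hτ (β, b) hβ)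
  have att : ∀ τ, 0 < τ →
      (∀ i, y i = 1 → τ * κhat τ ≤ ⟪x i, βhat τ⟫ + βhat₀ τ) ∧
      (∀ i, y i = -1 → κhat τ ≤ -(⟪x i, βhat τ⟫ + βhat₀ τ)) := by
    intro τ hτ
    exact (key τ hτ _ _ _).1 (hκ τ hτ).le
  -- positivity
  have kpos : 0 < κhat 1 := by
    obtain ⟨β, b, hs⟩ := hsep
    have hc : 0 < 1 + ‖β‖ := by positivity
    have h0 : 0 < M 1 ((1 + ‖β‖)⁻¹ • β) ((1 + ‖β‖)⁻¹ * b) := by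
      rw [hM', Finset.lt_inf'_iff]
      intro i _
      have e : ytil 1 i = y i := by
        rcases hy i with hi | hi
        · rw [hytil1 1 i hi, hi]; norm_num
        · rw [hytil2 1 i hi, hi]
      rw [e, real_inner_smul_right]
      have := mul_pos (inv_pos.2 hc) (hs i)
      linarith
    rw [hκ 1 one_pos]
    refine h0.trans_le (hopt 1 one_pos (_, _) ?_)
    simp only
    rw [norm_smul, norm_inv, Real.norm_of_nonneg hc.le, inv_mul_le_iff₀ hc]
    linarith
  obtain ⟨a1, a2⟩ := att 1 one_pos
  -- uniqueness at 1
  have uniq : ∀ β b, ‖β‖ ≤ 1 → (∀ i, y i = 1 → κhat 1 ≤ ⟪x i, β⟫ + b) →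
      (∀ i, y i = -1 → κhat 1 ≤ -(⟪x i, β⟫ + b)) → β = βhat 1 ∧ b = βhat₀ 1 := by
    intro β b hβ h1 h2
    have hb : β = βhat 1 := by
      by_contra hne
      have hm : ‖(1/2 : ℝ) • β + (1/2 : ℝ) • βhat 1‖ < 1 :=
        norm_combo_lt_of_ne hβ (hnorm 1 one_pos) hne (by norm_num) (by norm_num) (by norm_num)
      set m := (1/2 : ℝ) • β + (1/2 : ℝ) • βhat 1 with hmdef
      have hi : ∀ i, ⟪x i, m⟫ = 1/2 * ⟪x i, β⟫ + 1/2 * ⟪x i, βhat 1⟫ := by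
        intro i
        rw [hmdef, inner_add_right, real_inner_smul_right, real_inner_smul_right]
      have hp : 0 < 1 + ‖m‖ := by positivity
      have hs : 1 < 2 / (1 + ‖m‖) := by rw [lt_div_iff₀ hp]; linarith
      have hsn : 2 / (1 + ‖m‖) * ‖m‖ ≤ 1 := by
        rw [div_mul_eq_mul_div, div_le_iff₀ hp]; linarith
      set s := 2 / (1 + ‖m‖)
      have s0 : 0 < s := by linarith
      have := upper 1 one_pos (s • m) (s * (1/2 * b + 1/2 * βhat₀ 1)) (s * κhat 1)
        (by rw [norm_smul, Real.norm_of_nonneg s0.le]; exact hsn)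
        (by
          intro i hyi
          rw [real_inner_smul_right, hi, one_mul, ← mul_add]
          exact mul_le_mul_of_nonneg_left (by linarith [h1 i hyi, a1 i hyi]) s0.le)
        (by
          intro i hyi
          rw [real_inner_smul_right, hi, ← mul_add, ← mul_neg]
          exact mul_le_mul_of_nonneg_left (by linarith [h2 i hyi, a2 i hyi]) s0.le)
      nlinarith
    refine ⟨hb, ?_⟩
    subst hb
    have := upper 1 one_pos (βhat 1) ((b + βhat₀ 1) / 2) (κhat 1 + (βhat₀ 1 - b) / 2)
      hβ (fun i hi => by linarith [h1 i hi]) (fun i hi => by linarith [a2 i hi])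
    have := upper 1 one_pos (βhat 1) ((b + βhat₀ 1) / 2) (κhat 1 + (b - βhat₀ 1) / 2)
      hβ (fun i hi => by linarith [a1 i hi]) (fun i hi => by linarith [h2 i hi])
    linarith
  intro τ hτ
  have ht : 0 < τ + 1 := by linarith
  obtain ⟨t1, t2⟩ := att τ hτ
  have le1 : (τ + 1) / 2 * κhat τ ≤ κhat 1 :=
    upper 1 one_pos (βhat τ) (βhat₀ τ - (τ - 1) / 2 * κhat τ) _ (hnorm τ hτ)
      (fun i hi => by linarith [t1 i hi]) (fun i hi => by linarith [t2 i hi])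
  have e1 : τ * (2 / (τ + 1) * κhat 1) = κhat 1 + (τ - 1) / (τ + 1) * κhat 1 := by
    field_simp; ring
  have e2 : 2 / (τ + 1) * κhat 1 = κhat 1 - (τ - 1) / (τ + 1) * κhat 1 := by
    field_simp; ring
  have le2 : 2 / (τ + 1) * κhat 1 ≤ κhat τ :=
    upper τ hτ (βhat 1) (βhat₀ 1 + (τ - 1) / (τ + 1) * κhat 1) _ (hnorm 1 one_pos)
      (fun i hi => by rw [e1]; linarith [a1 i hi])
      (fun i hi => by rw [e2]; linarith [a2 i hi])
  have ek : κhat τ = 2 / (τ + 1) * κhat 1 := by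
    refine le_antisymm ?_ le2
    rw [div_mul_eq_mul_div, le_div_iff₀ ht]
    linarith
  have ek' : (τ + 1) / 2 * κhat τ = κhat 1 := by
    rw [ek]; field_simp
  obtain ⟨u1, u2⟩ := uniq (βhat τ) (βhat₀ τ - (τ - 1) / 2 * κhat τ) (hnorm τ hτ)
      (fun i hi => by linarith [t1 i hi]) (fun i hi => by linarith [t2 i hi])
  refine ⟨u1, ?_, ek⟩
  have e3 : (τ - 1) / 2 * κhat τ = (τ - 1) / (τ + 1) * κhat 1 := by
    rw [ek]; field_simp
  linarith
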